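/- Let 1 < q ≤ ∞ and 2 ≤ p ≤ ∞. Then there exist a sequence (φ_j) of Schwartz functions on ℝ³ and a Schwartz function ψ on ℝ³ such that ‖φ_j‖_{l^q l^p L²} → 0 as j → ∞ while ∫_{ℝ³} φ_j ψ dx dy → ∞; in particular (φ_j) converges to 0 in l^q l^p L² but does not converge in the sense of tempered distributions. -/

import Mathlib

noncomputable section

open MeasureTheory
open scoped ENNReal

abbrev R3 := ℝ × ℝ × ℝ

/-- (Nonunitary) Fourier transform on ℝ³ = ℝ_x × ℝ²_y. -/
def ft3 (f : R3 → ℂ) (ζ : R3) : ℂ :=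
  ∫ z : R3, Complex.exp (-Complex.I *
    ((z.1 * ζ.1 + z.2.1 * ζ.2.1 + z.2.2 * ζ.2.2 : ℝ) : ℂ)) * f z

/-- The region Γ_{λ,k} = {(ξ,η) : λ ≤ |ξ| < 2λ, |η/ξ − k|_∞ ≤ λ/2}. -/
def Gam (l : ℝ) (k : ℝ × ℝ) : Set R3 :=
  {ζ : R3 | l ≤ |ζ.1| ∧ |ζ.1| < 2 * l ∧
    max |ζ.2.1 / ζ.1 - k.1| |ζ.2.2 / ζ.1 - k.2| ≤ l / 2}

/-- Fourier projection f_{Γ_{λ,k}}: inverse Fourier transform of the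
characteristic function of Γ_{λ,k} times f̂. -/
def projG (l : ℝ) (k : ℝ × ℝ) (φ : SchwartzMap R3 ℂ) (z : R3) : ℂ :=
  ∫ ζ in Gam l k, Complex.exp (Complex.I *
    ((z.1 * ζ.1 + z.2.1 * ζ.2.1 + z.2.2 * ζ.2.2 : ℝ) : ℂ)) * ft3 (fun w => φ w) ζ

/-- ℓ^p sum in ℝ≥0∞, with the usual modification for p = ∞. -/
def lpS (p : ℝ≥0∞) {ι : Type*} (f : ι → ℝ≥0∞) : ℝ≥0∞ :=
  if p = ∞ then ⨆ i, f i else (∑' i, f i ^ p.toReal) ^ (1 / p.toReal)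

/-- The norm ‖φ‖_{l^q l^p L²} = (∑_{λ∈2^ℤ} λ^{q/2} (∑_{k∈λℤ²} ‖φ_{Γ_{λ,k}}‖_{L²}^p)^{q/p})^{1/q}. -/
def lqlpNorm (q p : ℝ≥0∞) (φ : SchwartzMap R3 ℂ) : ℝ≥0∞ :=
  lpS q fun n : ℤ => ((2 : ℝ≥0∞) ^ n) ^ ((1 : ℝ) / 2) *
    lpS p fun m : ℤ × ℤ =>
      eLpNorm (projG ((2 : ℝ) ^ n) ((2 : ℝ) ^ n * (m.1 : ℝ), (2 : ℝ) ^ n * (m.2 : ℝ)) φ) 2 volume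

open Filter

/-!
Fix a Schwartz function `φ` and let `φₙ(x, y) = φ(2⁻ⁿ x, y)`. By Plancherel, the bounded overlap of
the regions `Γ_{λ,k}` for fixed `λ`, and `ℓ² ⊆ ℓᵖ`, the `λ = 2ᵏ` term of the norm is at most a
constant times `a k = 2^{k/2} ‖φ̂‖_{L²(2ᵏ ≤ |ξ| < 2ᵏ⁺¹)}`. The sequence `a` is summable over `ℤ`,
and scaling in `x` translates it: the terms of `φₙ` are bounded by `a (n + k)`. Interpolating
between `ℓ¹` and `ℓ^∞`, the norm of `∑_{0 ≤ n < j} φₙ` is therefore `O(j^{1/q})`. If `φ` is a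
nonnegative bump, each `φₙ` with `n ≥ 0` is `1` on the unit ball, so the pairing of the same sum
with `ψ = φ` grows at least like `j`; as `q > 1`, a factor `c_j` with `c_j j^{1/q} → 0` and
`c_j j → ∞` finishes.
-/

open scoped FourierTransform SchwartzMap

/-! ### Sums of sequences -/

section LpSum

variable {ι : Type*} {f g : ι → ℝ≥0∞} {p : ℝ≥0∞}

lemma lpS_mono (h : ∀ i, f i ≤ g i) : lpS p f ≤ lpS p g := by
  unfold lpS
  split_ifs
  · exact iSup_mono h
  · gcongr with i
    exact h i

lemma lpS_const_mul (hp : p ≠ 0) (c : ℝ≥0∞) (f : ι → ℝ≥0∞) :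
    lpS p (fun i => c * f i) = c * lpS p f := by
  unfold lpS
  split_ifs with hp_top
  · rw [ENNReal.mul_iSup]
  · have hpos : 0 < p.toReal := ENNReal.toReal_pos hp hp_top
    simp only [ENNReal.mul_rpow_of_nonneg _ _ hpos.le, ENNReal.tsum_mul_left,
      ENNReal.mul_rpow_of_nonneg _ _ (one_div_nonneg.2 hpos.le), ← ENNReal.rpow_mul,
      mul_one_div_cancel hpos.ne', ENNReal.rpow_one]

-- At `p = ∞` the exponents are `1` and `0`, because `p.toReal = 0`.
lemma lpS_le_rpow_mul_tsum_rpow {r : ℝ} (hr : 0 < r) (hrp : ENNReal.ofReal r ≤ p) {B : ℝ≥0∞}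
    (hB : ∀ i, f i ≤ B) :
    lpS p f ≤ B ^ (1 - r / p.toReal) * (∑' i, f i ^ r) ^ (1 / p.toReal) := by
  unfold lpS
  split_ifs with hp
  · simpa [hp] using hB
  have hrp' : r ≤ p.toReal := (ENNReal.ofReal_le_iff_le_toReal hp).1 hrp
  have hp0 : 0 < p.toReal := hr.trans_le hrp'
  have hterm (i : ι) : f i ^ p.toReal ≤ B ^ (p.toReal - r) * f i ^ r := by
    have hexp : 0 ≤ p.toReal - r := sub_nonneg.2 hrp'
    have hsplit : f i ^ p.toReal = f i ^ (p.toReal - r) * f i ^ r := by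
      rw [← ENNReal.rpow_add_of_nonneg _ _ hexp hr.le, sub_add_cancel]
    rw [hsplit]
    gcongr
    exact hB i
  calc (∑' i, f i ^ p.toReal) ^ (1 / p.toReal)
      ≤ (B ^ (p.toReal - r) * ∑' i, f i ^ r) ^ (1 / p.toReal) := by
        rw [← ENNReal.tsum_mul_left]
        gcongr with i
        exact hterm i
    _ = B ^ (1 - r / p.toReal) * (∑' i, f i ^ r) ^ (1 / p.toReal) := by
        rw [ENNReal.mul_rpow_of_nonneg _ _ (by positivity), ← ENNReal.rpow_mul]
        congr 2
        field_simp

lemma one_sub_div_toReal_nonneg {r : ℝ} (hrp : ENNReal.ofReal r ≤ p) :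
    0 ≤ 1 - r / p.toReal := by
  rcases eq_or_ne p ∞ with rfl | hp
  · simp
  · exact sub_nonneg.2 <| div_le_one_of_le₀ ((ENNReal.ofReal_le_iff_le_toReal hp).1 hrp) (by simp)

lemma lpS_le_tsum_rpow {r : ℝ} (hr : 0 < r) (hrp : ENNReal.ofReal r ≤ p) :
    lpS p f ≤ (∑' i, f i ^ r) ^ (1 / r) := by
  have hB (i : ι) : f i ≤ (∑' i, f i ^ r) ^ (1 / r) := by
    rw [one_div, ENNReal.le_rpow_inv_iff hr]
    exact ENNReal.le_tsum (f := fun i => f i ^ r) i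
  have hcancel : 1 / r * (r / p.toReal) = 1 / p.toReal := by
    rw [← mul_div_assoc, one_div_mul_cancel hr.ne']
  refine (lpS_le_rpow_mul_tsum_rpow hr hrp hB).trans_eq ?_
  rw [← ENNReal.rpow_mul, ← ENNReal.rpow_add_of_nonneg _ _
    (mul_nonneg (by positivity) (one_sub_div_toReal_nonneg hrp)) (by positivity)]
  congr 1
  rw [mul_sub, hcancel, mul_one, sub_add_cancel]

lemma lpS_sum_add_le {G : Type*} [AddGroup G] (hp : 1 ≤ p) (s : Finset G) (v : G → ℝ≥0∞) :
    lpS p (fun m => ∑ n ∈ s, v (n + m)) ≤ (s.card : ℝ≥0∞) ^ (1 / p.toReal) * ∑' k, v k := by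
  set B := ∑' k, v k
  have hp' : ENNReal.ofReal 1 ≤ p := by rwa [ENNReal.ofReal_one]
  have hB (m : G) : ∑ n ∈ s, v (n + m) ≤ B :=
    (ENNReal.sum_le_tsum s).trans_eq ((Equiv.addRight m).tsum_eq v)
  have hsum : ∑' m, ∑ n ∈ s, v (n + m) = s.card * B := by
    rw [Summable.tsum_finsetSum fun _ _ => ENNReal.summable]
    have hshift (n : G) : ∑' m, v (n + m) = B := (Equiv.addLeft n).tsum_eq v
    simp only [hshift, Finset.sum_const, nsmul_eq_mul]
  calc lpS p (fun m => ∑ n ∈ s, v (n + m))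
      ≤ B ^ (1 - 1 / p.toReal) * (s.card * B) ^ (1 / p.toReal) := by
        simpa [hsum] using lpS_le_rpow_mul_tsum_rpow one_pos hp' hB
    _ = (s.card : ℝ≥0∞) ^ (1 / p.toReal) * (B ^ (1 - 1 / p.toReal) * B ^ (1 / p.toReal)) := by
        rw [ENNReal.mul_rpow_of_nonneg _ _ (by positivity)]
        ring
    _ = (s.card : ℝ≥0∞) ^ (1 / p.toReal) * B := by
        rw [← ENNReal.rpow_add_of_nonneg _ _ (one_sub_div_toReal_nonneg hp') (by positivity),
          sub_add_cancel, ENNReal.rpow_one]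

end LpSum

lemma encard_setOf_abs_sub_le_half (x : ℝ) : {m : ℤ | |x - m| ≤ 1 / 2}.encard ≤ 2 := by
  have hsub : {m : ℤ | |x - m| ≤ 1 / 2} ⊆ Finset.Icc ⌈x - 1 / 2⌉ ⌊x + 1 / 2⌋ := by
    intro m hm
    rw [Set.mem_ofPred_eq, abs_le] at hm
    rw [Finset.coe_Icc, Set.mem_Icc, Int.ceil_le, Int.le_floor]
    constructor <;> linarith
  have hlen : ⌊x + 1 / 2⌋ + 1 - ⌈x - 1 / 2⌉ ≤ 2 := by
    have hfloor := Int.floor_le (x + 1 / 2)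
    have hceil := Int.le_ceil (x - 1 / 2)
    have hreal : (⌊x + 1 / 2⌋ : ℝ) ≤ ⌈x - 1 / 2⌉ + 1 := by linarith
    have hint : ⌊x + 1 / 2⌋ ≤ ⌈x - 1 / 2⌉ + 1 := by exact_mod_cast hreal
    linarith
  refine (Set.encard_le_encard hsub).trans ?_
  rw [Set.encard_coe_eq_coe_finsetCard, Int.card_Icc]
  exact_mod_cast Int.toNat_le.2 hlen

lemma ofReal_two_zpow (n : ℤ) : ENNReal.ofReal ((2 : ℝ) ^ n) = 2 ^ n := by
  rw [ENNReal.ofReal, Real.toNNReal_zpow zero_le_two]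
  simp [ENNReal.coe_zpow]

lemma two_zpow_mul_one_add_rpow_le (k : ℤ) :
    (2 : ℝ) ^ k * (1 + 2 ^ k) ^ (-2 : ℝ) ≤ (1 / 2) ^ k.natAbs := by
  have hpos : (0 : ℝ) < 2 ^ k := by positivity
  rw [Real.rpow_neg (by positivity), Real.rpow_two, ← div_eq_mul_inv, div_le_iff₀ (by positivity)]
  have hhalf : (2 : ℝ) ^ |k| * (1 / 2) ^ k.natAbs = 1 := by
    rw [← Int.natCast_natAbs, zpow_natCast, ← mul_pow]
    norm_num
  have hdom : (2 : ℝ) ^ |k| * 2 ^ k ≤ (1 + 2 ^ k) ^ 2 := by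
    rcases abs_cases k with ⟨h, -⟩ | ⟨h, -⟩
    · rw [h]
      nlinarith
    · rw [h, ← zpow_add₀ two_ne_zero, neg_add_cancel, zpow_zero]
      nlinarith
  calc (2 : ℝ) ^ k = (1 / 2) ^ k.natAbs * (2 ^ |k| * 2 ^ k) := by
        rw [← mul_assoc, mul_comm _ ((2 : ℝ) ^ |k|), hhalf, one_mul]
    _ ≤ (1 / 2) ^ k.natAbs * (1 + 2 ^ k) ^ 2 := by gcongr

lemma tsum_half_pow_natAbs_ne_top : ∑' k : ℤ, ENNReal.ofReal ((1 / 2) ^ k.natAbs) ≠ ∞ := by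
  refine Summable.tsum_ofReal_ne_top (Summable.of_nat_of_neg ?_ ?_) <;>
    simpa using summable_geometric_two

lemma ofReal_rpow_half_mul_ofReal_four_mul_rpow_half {t : ℝ} (ht : 0 ≤ t) :
    ENNReal.ofReal t ^ ((1 : ℝ) / 2) * ENNReal.ofReal (4 * t) ^ ((1 : ℝ) / 2) =
      2 * ENNReal.ofReal t := by
  have hsq : t * (4 * t) = (2 * t) ^ 2 := by ring
  rw [← ENNReal.mul_rpow_of_nonneg _ _ (by positivity), ← ENNReal.ofReal_mul ht, hsq,
    ENNReal.ofReal_rpow_of_nonneg (by positivity) (by positivity), ← Real.sqrt_eq_rpow,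
    Real.sqrt_sq (by positivity), ENNReal.ofReal_mul zero_le_two, ENNReal.ofReal_ofNat]

lemma exists_tendsto_mul_rpow_zero_tendsto_mul_atTop {s : ℝ} (hs : s < 1) :
    ∃ c : ℕ → ℝ, (∀ j, 0 ≤ c j) ∧ Tendsto (fun j => c j * (j : ℝ) ^ s) atTop (nhds 0) ∧
      Tendsto (fun j => c j * j) atTop atTop := by
  have hneg : 0 < (1 - s) / 2 := by linarith
  refine ⟨fun j => (j : ℝ) ^ (-((1 + s) / 2)), fun j => by positivity, ?_, ?_⟩
  · refine ((tendsto_rpow_neg_atTop hneg).comp tendsto_natCast_atTop_atTop).congr' ?_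
    filter_upwards [eventually_gt_atTop 0] with j hj
    rw [← Real.rpow_add (by positivity), Function.comp_apply]
    ring_nf
  · refine ((tendsto_rpow_atTop hneg).comp tendsto_natCast_atTop_atTop).congr' ?_
    filter_upwards [eventually_gt_atTop 0] with j hj
    rw [← Real.rpow_add_one (by positivity), Function.comp_apply]
    ring_nf

/-! ### `L²` norms and Schwartz functions -/

section Plancherel

variable {E H : Type*} [NormedAddCommGroup E] [InnerProductSpace ℝ E] [FiniteDimensional ℝ E]
  [MeasurableSpace E] [BorelSpace E] [NormedAddCommGroup H] [InnerProductSpace ℂ H]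
  [CompleteSpace H]

lemma fourier_toLp_ae_eq {g : E → H} (hg₁ : Integrable g) (hg₂ : MemLp g 2) :
    (𝓕 (hg₂.toLp g) : Lp (α := E) H 2) =ᵐ[volume] 𝓕 g := by
  have hcont : Continuous (𝓕 g) :=
    VectorFourier.fourierIntegral_continuous Real.continuous_fourierChar
      (by exact continuous_inner) hg₁
  -- By Parseval, both sides define the same tempered distribution.
  refine ae_eq_of_integral_contDiff_smul_eq ((Lp.memLp _).locallyIntegrable (by norm_num))
    hcont.locallyIntegrable fun s hs hsc => ?_
  have hsc' : HasCompactSupport fun x => (s x : ℂ) := hsc.comp_left Complex.ofReal_zero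
  let S : 𝓢(E, ℂ) := hsc'.toSchwartzMap (Complex.ofRealCLM.contDiff.comp hs)
  have hparseval : ∫ x, (𝓕 S) x • g x = ∫ x, S x • 𝓕 g x := by
    have := VectorFourier.integral_fourierIntegral_smul_eq_flip (μ := (volume : Measure E))
      (ν := (volume : Measure E)) (L := innerₗ E) (f := S) (g := g)
      Real.continuous_fourierChar (by exact continuous_inner) S.integrable hg₁
    rwa [flip_innerₗ] at this
  have hdistr := congrArg (fun T => T S) (Lp.fourier_toTemperedDistribution_eq (hg₂.toLp g))
  simp only [TemperedDistribution.fourier_apply, Lp.toTemperedDistribution_apply] at hdistr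
  have hS : ∫ x, S x • (𝓕 (hg₂.toLp g) : Lp (α := E) H 2 volume) x = ∫ x, S x • 𝓕 g x := by
    rw [← hdistr, ← hparseval]
    refine integral_congr_ae ?_
    filter_upwards [hg₂.coeFn_toLp] with x hx
    rw [hx]
  exact hS

lemma eLpNorm_fourier_eq {g : E → H} (hg₁ : Integrable g) (hg₂ : MemLp g 2) :
    eLpNorm (𝓕 g) 2 volume = eLpNorm g 2 volume := by
  rw [← eLpNorm_congr_ae (fourier_toLp_ae_eq hg₁ hg₂), ← eLpNorm_congr_ae hg₂.coeFn_toLp,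
    ← ENNReal.toReal_eq_toReal_iff' (Lp.eLpNorm_ne_top _) (Lp.eLpNorm_ne_top _),
    ← Lp.norm_def, ← Lp.norm_def, Lp.norm_fourier_eq]

end Plancherel

section Scaling

variable {E F : Type*} [NormedAddCommGroup E] [NormedSpace ℝ E] [FiniteDimensional ℝ E]
  [MeasurableSpace E] [BorelSpace E] [NormedAddCommGroup F] (μ : Measure E) [μ.IsAddHaarMeasure]
  (f : E → F) {p : ℝ≥0∞}

lemma eLpNorm_comp_smul (hp : p ≠ ∞) {r : ℝ} (hr : r ≠ 0) :
    eLpNorm (fun x => f (r • x)) p μ =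
      ENNReal.ofReal |(r ^ Module.finrank ℝ E)⁻¹| ^ (1 / p).toReal * eLpNorm f p μ := by
  rw [← smul_eq_mul, ← eLpNorm_smul_measure_of_ne_top hp,
    ← Measure.map_addHaar_smul μ hr, (measurableEmbedding_const_smul₀ hr).eLpNorm_map_measure]
  rfl

lemma eLpNorm_comp_neg (hp : p ≠ ∞) : eLpNorm (fun x => f (-x)) p μ = eLpNorm f p μ := by
  simpa using eLpNorm_comp_smul μ f hp (neg_ne_zero.2 (one_ne_zero' ℝ))

end Scaling

lemma eLpNorm_comp_snd {α β F : Type*} [MeasurableSpace α] [MeasurableSpace β]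
    [NormedAddCommGroup F] (μ : Measure α) (ν : Measure β) [SFinite ν] {g : β → F}
    (hg : AEStronglyMeasurable g ν) {p : ℝ≥0∞} (hp : p ≠ ∞) :
    eLpNorm (fun z : α × β => g z.2) p (μ.prod ν) =
      μ Set.univ ^ (1 / p).toReal * eLpNorm g p ν := by
  rw [← smul_eq_mul, ← eLpNorm_smul_measure_of_ne_top hp, ← Measure.map_snd_prod,
    eLpNorm_map_measure _ measurable_snd.aemeasurable]
  · rfl
  · rw [Measure.map_snd_prod]
    exact hg.smul_measure _

lemma eLpNorm_two_sq {α F : Type*} [MeasurableSpace α] [NormedAddCommGroup F] (f : α → F)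
    (μ : Measure α) : eLpNorm f 2 μ ^ (2 : ℝ) = ∫⁻ x, ‖f x‖ₑ ^ (2 : ℝ) ∂μ :=
  eLpNorm_nnreal_pow_eq_lintegral (two_ne_zero (α := NNReal))

lemma tsum_setLIntegral_le_mul_of_encard_le {α ι : Type*} [MeasurableSpace α] [Countable ι]
    {μ : Measure α} {s : ι → Set α} {t : Set α} (hs : ∀ i, MeasurableSet (s i))
    (ht : MeasurableSet t) (hst : ∀ i, s i ⊆ t) {N : ℕ} (hN : ∀ x, {i | x ∈ s i}.encard ≤ N)
    {f : α → ℝ≥0∞} (hf : Measurable f) :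
    ∑' i, ∫⁻ x in s i, f x ∂μ ≤ N * ∫⁻ x in t, f x ∂μ := by
  simp_rw [← lintegral_indicator (hs _)]
  rw [← lintegral_indicator ht, ← lintegral_tsum fun i => (hf.indicator (hs i)).aemeasurable,
    ← lintegral_const_mul _ (hf.indicator ht)]
  refine lintegral_mono fun x => ?_
  calc ∑' i, (s i).indicator f x
      = ∑' i, {i | x ∈ s i}.indicator (fun _ => t.indicator f x) i := by
        congr 1 with i
        by_cases hx : x ∈ s i
        · simp [hx, hst i hx]
        · simp [hx]
    _ = {i | x ∈ s i}.encard * t.indicator f x := by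
        rw [← tsum_subtype, ENNReal.tsum_set_const]
    _ ≤ N * t.indicator f x := by
        gcongr
        exact_mod_cast hN x

lemma memLp_two_one_add_norm_rpow {E : Type*} [NormedAddCommGroup E] [NormedSpace ℝ E]
    [FiniteDimensional ℝ E] [MeasurableSpace E] [BorelSpace E] (μ : Measure E)
    [μ.IsAddHaarMeasure] {r : ℝ} (hr : (Module.finrank ℝ E : ℝ) < 2 * r) :
    MemLp (fun x : E => (1 + ‖x‖) ^ (-r)) 2 μ := by
  have hmeas : Measurable fun x : E => (1 + ‖x‖) ^ (-r) := by fun_prop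
  rw [memLp_two_iff_integrable_sq hmeas.aestronglyMeasurable]
  refine (integrable_one_add_norm hr).congr (.of_forall fun x => ?_)
  change (1 + ‖x‖) ^ (-(2 * r)) = ((1 + ‖x‖) ^ (-r)) ^ 2
  rw [← Real.rpow_mul_natCast (by positivity), Nat.cast_two, neg_mul, mul_comm]

lemma exists_norm_le_mul_one_add_norm_rpow {E F V : Type*} [NormedAddCommGroup E]
    [NormedSpace ℝ E] [NormedAddCommGroup F] [NormedSpace ℝ F] [NormedAddCommGroup V]
    [NormedSpace ℝ V] (f : 𝓢(E × F, V)) (k l : ℕ) :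
    ∃ C : ℝ, 0 ≤ C ∧
      ∀ x y, ‖f (x, y)‖ ≤ C * (1 + ‖x‖) ^ (-k : ℝ) * (1 + ‖y‖) ^ (-l : ℝ) := by
  set C := 2 ^ (k + l) * ((Finset.Iic (k + l, 0)).sup fun m => SchwartzMap.seminorm ℝ m.1 m.2) f
  refine ⟨C, by positivity, fun x y => ?_⟩
  have hseminorm : (1 + ‖(x, y)‖) ^ (k + l) * ‖f (x, y)‖ ≤ C := by
    simpa using SchwartzMap.one_add_le_sup_seminorm_apply (𝕜 := ℝ) (m := (k + l, 0)) le_rfl le_rfl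
      f (x, y)
  rw [Real.rpow_neg (by positivity), Real.rpow_neg (by positivity), Real.rpow_natCast,
    Real.rpow_natCast, mul_assoc, ← mul_inv, ← div_eq_mul_inv, le_div_iff₀ (by positivity)]
  calc ‖f (x, y)‖ * ((1 + ‖x‖) ^ k * (1 + ‖y‖) ^ l)
      ≤ ‖f (x, y)‖ * ((1 + ‖(x, y)‖) ^ k * (1 + ‖(x, y)‖) ^ l) := by
        gcongr
        · exact norm_fst_le (x, y)
        · exact norm_snd_le (x, y)
    _ ≤ C := by rwa [← pow_add, mul_comm]

lemma integrable_mul_schwartz {E : Type*} [NormedAddCommGroup E] [NormedSpace ℝ E]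
    [MeasurableSpace E] [OpensMeasurableSpace E] (μ : Measure E) [μ.HasTemperateGrowth]
    (φ ψ : 𝓢(E, ℂ)) : Integrable (fun z => φ z * ψ z) μ :=
  (φ.memLp 2 μ).integrable_mul (ψ.memLp 2 μ)

instance isAddHaarMeasure_volume_prod {G H : Type*} [AddGroup G] [TopologicalSpace G]
    [MeasureSpace G] [AddGroup H] [TopologicalSpace H] [MeasureSpace H]
    [(volume : Measure G).IsAddHaarMeasure] [(volume : Measure H).IsAddHaarMeasure]
    [SFinite (volume : Measure G)] [SFinite (volume : Measure H)]
    [MeasurableAdd G] [MeasurableAdd H] :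
    (volume : Measure (G × H)).IsAddHaarMeasure :=
  Measure.prod.instIsAddHaarMeasure _ _

/-! ### The Fourier transform on `ℝ³` -/

/-- `R3` carries the sup norm, for which Mathlib has no Fourier transform; this identifies it with
the Euclidean space on the same coordinates. -/
def euclideanEquiv : WithLp 2 (ℝ × WithLp 2 (ℝ × ℝ)) ≃L[ℝ] R3 :=
  (WithLp.prodContinuousLinearEquiv 2 ℝ ℝ (WithLp 2 (ℝ × ℝ))).trans
    ((ContinuousLinearEquiv.refl ℝ ℝ).prodCongr (WithLp.prodContinuousLinearEquiv 2 ℝ ℝ ℝ))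

lemma measurePreserving_euclideanEquiv : MeasurePreserving euclideanEquiv volume volume :=
  ((MeasurePreserving.id volume).prod (WithLp.volume_preserving_ofLp ℝ ℝ)).comp
    (WithLp.volume_preserving_ofLp ℝ (WithLp 2 (ℝ × ℝ)))

lemma measurableEmbedding_euclideanEquiv : MeasurableEmbedding euclideanEquiv :=
  euclideanEquiv.toHomeomorph.measurableEmbedding

lemma ft3_eq_fourier (f : R3 → ℂ) (ζ : R3) :
    ft3 f ζ = 𝓕 (f ∘ euclideanEquiv) ((2 * Real.pi)⁻¹ • euclideanEquiv.symm ζ) := by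
  obtain ⟨w, rfl⟩ := euclideanEquiv.surjective ζ
  rw [ft3, Real.fourier_eq',
    ← measurePreserving_euclideanEquiv.integral_comp measurableEmbedding_euclideanEquiv]
  congr 1 with v
  have hinner : (euclideanEquiv v).1 * (euclideanEquiv w).1 +
      (euclideanEquiv v).2.1 * (euclideanEquiv w).2.1 +
      (euclideanEquiv v).2.2 * (euclideanEquiv w).2.2 = inner ℝ v w := by
    simp only [euclideanEquiv, ContinuousLinearEquiv.trans_apply,
      WithLp.prodContinuousLinearEquiv_apply, ContinuousLinearEquiv.prodCongr_apply,
      ContinuousLinearEquiv.refl_apply, WithLp.ofLp_fst, WithLp.ofLp_snd,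
      WithLp.prod_inner_apply, RCLike.inner_apply, Real.ringHom_apply]
    ring
  rw [hinner, ContinuousLinearEquiv.symm_apply_apply, inner_smul_right, Function.comp_apply,
    smul_eq_mul]
  congr 2
  push_cast
  field_simp

/-- `ft3` as a continuous linear operator on Schwartz functions. -/
def fourierR3CLM : 𝓢(R3, ℂ) →L[ℂ] 𝓢(R3, ℂ) :=
  SchwartzMap.compCLMOfContinuousLinearEquiv ℂ
      (euclideanEquiv.symm.trans
        (ContinuousLinearEquiv.smulLeft (Units.mk0 (2 * Real.pi)⁻¹ (by positivity)))) ∘L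
    FourierTransform.fourierCLM ℂ 𝓢(WithLp 2 (ℝ × WithLp 2 (ℝ × ℝ)), ℂ) ∘L
    SchwartzMap.compCLMOfContinuousLinearEquiv ℂ euclideanEquiv

lemma coe_fourierR3CLM (φ : 𝓢(R3, ℂ)) : ⇑(fourierR3CLM φ) = ft3 φ :=
  funext fun ζ => (ft3_eq_fourier φ ζ).symm

/-- The constant `(2π)^{3/2}` in Plancherel's identity for `ft3`, whose phase carries no `2π`. -/
def plancherelConst : ℝ≥0∞ := ENNReal.ofReal ((2 * Real.pi) ^ 3) ^ ((1 : ℝ) / 2)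

lemma plancherelConst_ne_top : plancherelConst ≠ ∞ :=
  ENNReal.rpow_ne_top_of_nonneg (by positivity) ENNReal.ofReal_ne_top

lemma eLpNorm_ft3 {g : R3 → ℂ} (hg₁ : Integrable g) (hg₂ : MemLp g 2) :
    eLpNorm (ft3 g) 2 volume = plancherelConst * eLpNorm g 2 volume := by
  have hpos : 0 < 2 * Real.pi := by positivity
  have hdim : Module.finrank ℝ (WithLp 2 (ℝ × WithLp 2 (ℝ × ℝ))) = 3 := by
    simp [euclideanEquiv.toLinearEquiv.finrank_eq]
  have hg₁' : Integrable (g ∘ euclideanEquiv) :=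
    (measurePreserving_euclideanEquiv.integrable_comp_emb measurableEmbedding_euclideanEquiv).2 hg₁
  have hg₂' : MemLp (g ∘ euclideanEquiv) 2 :=
    hg₂.comp_measurePreserving measurePreserving_euclideanEquiv
  calc eLpNorm (ft3 g) 2 volume
      = eLpNorm (ft3 g ∘ euclideanEquiv) 2 volume := by
        rw [← measurePreserving_euclideanEquiv.map_eq,
          measurableEmbedding_euclideanEquiv.eLpNorm_map_measure]
    _ = eLpNorm (fun w => 𝓕 (g ∘ euclideanEquiv) ((2 * Real.pi)⁻¹ • w)) 2 volume := by
        congr 1 with w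
        simp [ft3_eq_fourier]
    _ = plancherelConst * eLpNorm (g ∘ euclideanEquiv) 2 volume := by
        rw [eLpNorm_comp_smul _ _ ENNReal.ofNat_ne_top (inv_ne_zero hpos.ne'), hdim,
          eLpNorm_fourier_eq hg₁' hg₂', inv_pow, inv_inv, abs_of_pos (by positivity),
          ENNReal.toReal_div, ENNReal.toReal_one, ENNReal.toReal_ofNat,
          plancherelConst]
    _ = _ := by
        rw [eLpNorm_comp_measurePreserving hg₂.1 measurePreserving_euclideanEquiv]

lemma measurableSet_Gam (l : ℝ) (k : ℝ × ℝ) : MeasurableSet (Gam l k) := by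
  unfold Gam
  measurability

lemma projG_eq_ft3_neg (l : ℝ) (k : ℝ × ℝ) (φ : 𝓢(R3, ℂ)) (z : R3) :
    projG l k φ z = ft3 ((Gam l k).indicator (ft3 φ)) (-z) := by
  have hphase (ζ : R3) : Complex.I * ((z.1 * ζ.1 + z.2.1 * ζ.2.1 + z.2.2 * ζ.2.2 : ℝ) : ℂ) =
      -Complex.I * ((ζ.1 * (-z).1 + ζ.2.1 * (-z).2.1 + ζ.2.2 * (-z).2.2 : ℝ) : ℂ) := by
    push_cast [Prod.fst_neg, Prod.snd_neg]
    ring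
  simp only [projG, ft3.eq_def _ (-z), hphase, ← integral_indicator (measurableSet_Gam l k)]
  congr 1 with ζ
  by_cases hζ : ζ ∈ Gam l k <;> simp [hζ]

lemma eLpNorm_projG (l : ℝ) (k : ℝ × ℝ) (φ : 𝓢(R3, ℂ)) :
    eLpNorm (projG l k φ) 2 volume =
      plancherelConst * eLpNorm (ft3 φ) 2 (volume.restrict (Gam l k)) := by
  have hm := measurableSet_Gam l k
  have hint : Integrable ((Gam l k).indicator (ft3 φ)) := by
    rw [← coe_fourierR3CLM]
    exact (fourierR3CLM φ).integrable.indicator hm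
  have hL2 : MemLp ((Gam l k).indicator (ft3 φ)) 2 := by
    rw [← coe_fourierR3CLM]
    exact ((fourierR3CLM φ).memLp 2).indicator hm
  rw [funext (projG_eq_ft3_neg l k φ), eLpNorm_comp_neg _ _ ENNReal.ofNat_ne_top,
    eLpNorm_ft3 hint hL2,
    eLpNorm_indicator_eq_eLpNorm_restrict hm]

/-! ### Dyadic shells -/

/-- The frequency shell `l ≤ |ξ| < 2l`, the union of the regions `Gam l k` over all `k`. -/
def shell (l : ℝ) : Set R3 := {ζ | l ≤ |ζ.1| ∧ |ζ.1| < 2 * l}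

lemma measurableSet_shell (l : ℝ) : MeasurableSet (shell l) := by
  unfold shell
  measurability

lemma Gam_subset_shell (l : ℝ) (k : ℝ × ℝ) : Gam l k ⊆ shell l :=
  fun _ hζ => ⟨hζ.1, hζ.2.1⟩

lemma encard_setOf_mem_Gam_le {l : ℝ} (hl : 0 < l) (ζ : R3) :
    {m : ℤ × ℤ | ζ ∈ Gam l (l * m.1, l * m.2)}.encard ≤ 4 := by
  have hrescale (t : ℝ) (m : ℤ) (h : |t - l * m| ≤ l / 2) : |t / l - m| ≤ 1 / 2 := by
    rwa [div_sub' hl.ne', abs_div, abs_of_pos hl, div_le_div_iff₀ hl two_pos, one_mul,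
      ← le_div_iff₀ two_pos]
  have hsub : {m : ℤ × ℤ | ζ ∈ Gam l (l * m.1, l * m.2)} ⊆
      {m : ℤ | |ζ.2.1 / ζ.1 / l - m| ≤ 1 / 2} ×ˢ {m : ℤ | |ζ.2.2 / ζ.1 / l - m| ≤ 1 / 2} :=
    fun m hm => ⟨hrescale _ _ (max_le_iff.1 hm.2.2).1, hrescale _ _ (max_le_iff.1 hm.2.2).2⟩
  calc {m : ℤ × ℤ | ζ ∈ Gam l (l * m.1, l * m.2)}.encard
      ≤ {m : ℤ | |ζ.2.1 / ζ.1 / l - m| ≤ 1 / 2}.encard *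
          {m : ℤ | |ζ.2.2 / ζ.1 / l - m| ≤ 1 / 2}.encard := by
        rw [← Set.encard_prod]
        exact Set.encard_le_encard hsub
    _ ≤ 2 * 2 := mul_le_mul' (encard_setOf_abs_sub_le_half _) (encard_setOf_abs_sub_le_half _)
    _ = 4 := by norm_num

/-- The contribution `2^{k/2} ‖f‖_{L²(2^k ≤ |ξ| < 2^{k+1})}` of one dyadic shell to the
homogeneous Besov-type norm that dominates `lqlpNorm` when `f` is the Fourier transform. -/
def shellNorm (f : R3 → ℂ) (k : ℤ) : ℝ≥0∞ :=
  ((2 : ℝ≥0∞) ^ k) ^ ((1 : ℝ) / 2) * eLpNorm f 2 (volume.restrict (shell (2 ^ k)))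

lemma lpS_eLpNorm_Gam_le {f : R3 → ℂ} (hf : Measurable f) {p : ℝ≥0∞} (hp : 2 ≤ p) {l : ℝ}
    (hl : 0 < l) :
    lpS p (fun m : ℤ × ℤ => eLpNorm f 2 (volume.restrict (Gam l (l * m.1, l * m.2)))) ≤
      2 * eLpNorm f 2 (volume.restrict (shell l)) := by
  have hoverlap : ∑' m : ℤ × ℤ, eLpNorm f 2 (volume.restrict (Gam l (l * m.1, l * m.2))) ^ (2 : ℝ)
      ≤ (2 * eLpNorm f 2 (volume.restrict (shell l))) ^ (2 : ℝ) := by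
    have hfour : (2 : ℝ≥0∞) ^ (2 : ℝ) = (4 : ℕ) := by norm_num
    simp only [eLpNorm_two_sq, ENNReal.mul_rpow_of_nonneg _ _ zero_le_two, hfour]
    exact tsum_setLIntegral_le_mul_of_encard_le (fun m => measurableSet_Gam l _)
      (measurableSet_shell l) (fun m => Gam_subset_shell l _) (encard_setOf_mem_Gam_le hl)
      (hf.enorm.pow_const _)
  refine (lpS_le_tsum_rpow two_pos (by simpa using hp)).trans ?_
  rwa [one_div, ENNReal.rpow_inv_le_iff two_pos]

lemma lqlpNorm_le_lpS_shellNorm {q p : ℝ≥0∞} (hq : q ≠ 0) (hp : 2 ≤ p) (φ : 𝓢(R3, ℂ)) :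
    lqlpNorm q p φ ≤ 2 * plancherelConst * lpS q (shellNorm (ft3 φ)) := by
  have hp0 : p ≠ 0 := (two_pos.trans_le hp).ne'
  have hmeas : Measurable (ft3 φ) := by
    rw [← coe_fourierR3CLM]
    exact (fourierR3CLM φ).continuous.measurable
  rw [← lpS_const_mul hq]
  refine lpS_mono fun n => ?_
  simp only [eLpNorm_projG, lpS_const_mul hp0, shellNorm]
  calc ((2 : ℝ≥0∞) ^ n) ^ ((1 : ℝ) / 2) * (plancherelConst * lpS p fun m : ℤ × ℤ =>
        eLpNorm (ft3 φ) 2 (volume.restrict (Gam (2 ^ n) (2 ^ n * m.1, 2 ^ n * m.2))))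
      ≤ ((2 : ℝ≥0∞) ^ n) ^ ((1 : ℝ) / 2) * (plancherelConst *
          (2 * eLpNorm (ft3 φ) 2 (volume.restrict (shell (2 ^ n))))) := by
        gcongr
        exact lpS_eLpNorm_Gam_le hmeas hp (by positivity)
    _ = _ := by ring

lemma volume_setOf_le_abs_lt_le (l : ℝ) :
    volume {x : ℝ | l ≤ |x| ∧ |x| < 2 * l} ≤ ENNReal.ofReal (4 * l) := by
  have hsub : {x : ℝ | l ≤ |x| ∧ |x| < 2 * l} ⊆ Set.Icc (-(2 * l)) (2 * l) :=
    fun x hx => abs_le.1 hx.2.le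
  refine (measure_mono hsub).trans_eq ?_
  rw [Real.volume_Icc]
  ring_nf

lemma volume_restrict_shell (l : ℝ) :
    (volume : Measure R3).restrict (shell l) =
      (volume.restrict {x : ℝ | l ≤ |x| ∧ |x| < 2 * l}).prod volume := by
  have hprod : shell l = {x : ℝ | l ≤ |x| ∧ |x| < 2 * l} ×ˢ Set.univ := by
    ext ζ; simp [shell]
  rw [hprod, Measure.volume_eq_prod, ← Measure.prod_restrict, Measure.restrict_univ]

lemma eLpNorm_comp_snd_shell_le {g : ℝ × ℝ → ℝ} (hg : AEStronglyMeasurable g) (l : ℝ) :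
    eLpNorm (fun ζ : R3 => g ζ.2) 2 (volume.restrict (shell l)) ≤
      ENNReal.ofReal (4 * l) ^ ((1 : ℝ) / 2) * eLpNorm g 2 volume := by
  rw [volume_restrict_shell, eLpNorm_comp_snd _ _ hg ENNReal.ofNat_ne_top,
    Measure.restrict_apply_univ, ENNReal.toReal_div, ENNReal.toReal_one, ENNReal.toReal_ofNat]
  gcongr
  exact volume_setOf_le_abs_lt_le l

lemma shellNorm_le_of_norm_le {f : R3 → ℂ} {C : ℝ} (hC : 0 ≤ C)
    (hf : ∀ x y, ‖f (x, y)‖ ≤ C * (1 + ‖x‖) ^ (-2 : ℝ) * (1 + ‖y‖) ^ (-2 : ℝ)) (k : ℤ) :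
    shellNorm f k ≤ 2 * ENNReal.ofReal C *
      eLpNorm (fun y : ℝ × ℝ => (1 + ‖y‖) ^ (-2 : ℝ)) 2 volume *
      ENNReal.ofReal ((1 / 2) ^ k.natAbs) := by
  set A : ℝ := (1 + 2 ^ k) ^ (-2 : ℝ)
  set g : ℝ × ℝ → ℝ := fun y => (1 + ‖y‖) ^ (-2 : ℝ)
  have hpointwise : ∀ᵐ ζ ∂volume.restrict (shell (2 ^ k)), ‖f ζ‖ ≤ C * A * ‖g ζ.2‖ := by
    filter_upwards [ae_restrict_mem (measurableSet_shell _)] with ζ hζ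
    refine (hf ζ.1 ζ.2).trans (mul_le_mul_of_nonneg (mul_le_mul_of_nonneg_left ?_ hC)
      (le_abs_self _) (by positivity) (abs_nonneg _))
    exact Real.rpow_le_rpow_of_nonpos (by positivity) (by grw [hζ.1, Real.norm_eq_abs]) (by simp)
  calc shellNorm f k
      ≤ ((2 : ℝ≥0∞) ^ k) ^ ((1 : ℝ) / 2) * (ENNReal.ofReal (C * A) *
          (ENNReal.ofReal (4 * 2 ^ k) ^ ((1 : ℝ) / 2) * eLpNorm g 2 volume)) := by
        unfold shellNorm
        gcongr
        refine (eLpNorm_le_mul_eLpNorm_of_ae_le_mul hpointwise 2).trans ?_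
        gcongr
        exact eLpNorm_comp_snd_shell_le (by measurability) _
    _ = ENNReal.ofReal (2 ^ k) ^ ((1 : ℝ) / 2) * ENNReal.ofReal (4 * 2 ^ k) ^ ((1 : ℝ) / 2) *
          (ENNReal.ofReal (C * A) * eLpNorm g 2 volume) := by
        rw [ofReal_two_zpow]
        ring
    _ = 2 * ENNReal.ofReal C * eLpNorm g 2 volume * ENNReal.ofReal (2 ^ k * A) := by
        rw [ofReal_rpow_half_mul_ofReal_four_mul_rpow_half (by positivity), ENNReal.ofReal_mul hC,
          ENNReal.ofReal_mul (q := A) (by positivity)]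
        ring
    _ ≤ _ := by
        gcongr
        exact two_zpow_mul_one_add_rpow_le k

lemma tsum_shellNorm_ne_top (f : 𝓢(R3, ℂ)) : ∑' k, shellNorm f k ≠ ∞ := by
  obtain ⟨C, hC, hf⟩ := exists_norm_le_mul_one_add_norm_rpow f 2 2
  have hL2 : MemLp (fun y : ℝ × ℝ => (1 + ‖y‖) ^ (-2 : ℝ)) 2 :=
    memLp_two_one_add_norm_rpow volume (by norm_num)
  refine ne_top_of_le_ne_top ?_ (ENNReal.tsum_le_tsum (shellNorm_le_of_norm_le hC hf))
  rw [ENNReal.tsum_mul_left]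
  exact ENNReal.mul_ne_top (ENNReal.mul_ne_top (by finiteness) hL2.2.ne)
    tsum_half_pow_natAbs_ne_top

lemma shellNorm_ft3_smul_sum_le {ι : Type*} (c : ℂ) (s : Finset ι) (f : ι → 𝓢(R3, ℂ)) (k : ℤ) :
    shellNorm (ft3 (c • ∑ i ∈ s, f i : 𝓢(R3, ℂ))) k ≤ ‖c‖ₑ * ∑ i ∈ s, shellNorm (ft3 (f i)) k := by
  have hlin : ft3 (c • ∑ i ∈ s, f i : 𝓢(R3, ℂ)) = c • ∑ i ∈ s, ⇑(fourierR3CLM (f i)) := by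
    rw [← coe_fourierR3CLM, map_smul, map_sum]
    ext ζ
    simp
  simp only [shellNorm, hlin, eLpNorm_const_smul, ← Finset.mul_sum, mul_left_comm ‖c‖ₑ,
    ← coe_fourierR3CLM]
  gcongr
  exact eLpNorm_sum_le (fun i _ => (fourierR3CLM (f i)).continuous.aestronglyMeasurable)
    one_le_two

/-! ### Dilations in `x` -/

/-- The anisotropic dilation `(ξ, η) ↦ (2ⁿ ξ, η)`. -/
def dilationEquiv (n : ℤ) : R3 ≃L[ℝ] R3 :=
  (ContinuousLinearEquiv.smulLeft (Units.mk0 ((2 : ℝ) ^ n) (by positivity))).prodCongr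
    (ContinuousLinearEquiv.refl ℝ (ℝ × ℝ))

lemma dilationEquiv_apply (n : ℤ) (z : R3) : dilationEquiv n z = (2 ^ n * z.1, z.2) := rfl

lemma preimage_dilationEquiv_shell (n k : ℤ) :
    dilationEquiv n ⁻¹' shell (2 ^ (n + k)) = shell (2 ^ k) := by
  ext ζ
  have hpos : (0 : ℝ) < 2 ^ n := by positivity
  simp only [shell, Set.mem_preimage, Set.mem_ofPred_eq, dilationEquiv_apply, abs_mul,
    abs_of_pos hpos, zpow_add₀ (two_ne_zero' ℝ), mul_left_comm (2 : ℝ),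
    mul_le_mul_iff_right₀ hpos, mul_lt_mul_iff_right₀ hpos]

lemma map_dilationEquiv_volume (n : ℤ) :
    (volume : Measure R3).map (dilationEquiv n) = (2 : ℝ≥0∞) ^ (-n) • volume := by
  have hpos : (0 : ℝ) < 2 ^ n := by positivity
  have hfst : (volume : Measure ℝ).map (fun x => 2 ^ n * x) = (2 : ℝ≥0∞) ^ (-n) • volume := by
    rw [Real.map_volume_mul_left hpos.ne', ← zpow_neg, abs_of_pos (by positivity),
      ofReal_two_zpow]
  calc (volume : Measure R3).map (dilationEquiv n)
      = ((volume : Measure ℝ).map (fun x => 2 ^ n * x)).prod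
          ((volume : Measure (ℝ × ℝ)).map id) :=
        (Measure.map_prod_map _ _ (measurable_const_mul _) measurable_id).symm
    _ = (2 : ℝ≥0∞) ^ (-n) • volume := by
        rw [hfst, Measure.map_id, Measure.prod_smul_left]
        rfl

lemma measurableEmbedding_dilationEquiv (n : ℤ) : MeasurableEmbedding (dilationEquiv n) :=
  (dilationEquiv n).toHomeomorph.measurableEmbedding

lemma shellNorm_smul_comp_dilationEquiv (f : R3 → ℂ) (n k : ℤ) :
    shellNorm (fun ζ => (2 : ℂ) ^ n * f (dilationEquiv n ζ)) k = shellNorm f (n + k) := by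
  have hmap : (volume.restrict (shell (2 ^ k))).map (dilationEquiv n) =
      (2 : ℝ≥0∞) ^ (-n) • volume.restrict (shell (2 ^ (n + k))) := by
    rw [← preimage_dilationEquiv_shell n k, ← (measurableEmbedding_dilationEquiv n).restrict_map,
      map_dilationEquiv_volume, Measure.restrict_smul]
  have hpow : ((2 : ℝ≥0∞) ^ k) ^ ((1 : ℝ) / 2) * (2 ^ n * (2 ^ (-n)) ^ ((1 : ℝ) / 2)) =
      (2 ^ (n + k)) ^ ((1 : ℝ) / 2) := by
    simp only [← ENNReal.rpow_intCast, ← ENNReal.rpow_mul,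
      ← ENNReal.rpow_add _ _ two_ne_zero ENNReal.ofNat_ne_top]
    push_cast
    ring_nf
  have hnorm : eLpNorm (fun ζ => (2 : ℂ) ^ n * f (dilationEquiv n ζ)) 2
      (volume.restrict (shell (2 ^ k))) = 2 ^ n * (2 ^ (-n)) ^ ((1 : ℝ) / 2) *
        eLpNorm f 2 (volume.restrict (shell (2 ^ (n + k)))) := by
    calc _ = ‖(2 : ℂ) ^ n‖ₑ * eLpNorm (f ∘ dilationEquiv n) 2 (volume.restrict (shell (2 ^ k))) :=
          eLpNorm_const_smul ((2 : ℂ) ^ n) (f ∘ dilationEquiv n) 2 _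
      _ = _ := by
        rw [← (measurableEmbedding_dilationEquiv n).eLpNorm_map_measure, hmap,
          eLpNorm_smul_measure_of_ne_top ENNReal.ofNat_ne_top, smul_eq_mul, ← mul_assoc,
          ← ofReal_norm, norm_zpow, Complex.norm_ofNat, ofReal_two_zpow]
        norm_num
  rw [shellNorm, hnorm, ← mul_assoc, hpow, shellNorm]

/-- The stretched function `(x, y) ↦ φ(2⁻ⁿ x, y)`, whose frequencies are those of `φ` moved by
`n` dyadic shells towards `ξ = 0`. -/
def dilation (n : ℤ) : 𝓢(R3, ℂ) →L[ℂ] 𝓢(R3, ℂ) :=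
  SchwartzMap.compCLMOfContinuousLinearEquiv ℂ (dilationEquiv (-n))

lemma dilation_apply (n : ℤ) (φ : 𝓢(R3, ℂ)) (z : R3) :
    dilation n φ z = φ (dilationEquiv (-n) z) := rfl

lemma ft3_dilation (n : ℤ) (φ : 𝓢(R3, ℂ)) (ζ : R3) :
    ft3 (dilation n φ) ζ = 2 ^ n * ft3 φ (dilationEquiv n ζ) := by
  have hphase (z : R3) : z.1 * ζ.1 = 2 ^ (-n) * z.1 * (2 ^ n * ζ.1) := by
    rw [mul_mul_mul_comm, ← zpow_add₀ two_ne_zero, neg_add_cancel, zpow_zero, one_mul]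
  let g : R3 → ℂ := fun z => Complex.exp (-Complex.I *
    ((z.1 * (dilationEquiv n ζ).1 + z.2.1 * ζ.2.1 + z.2.2 * ζ.2.2 : ℝ) : ℂ)) * φ z
  calc ft3 (dilation n φ) ζ = ∫ z, g (dilationEquiv (-n) z) := by
        simp only [ft3, g, hphase, dilation_apply, dilationEquiv_apply]
    _ = 2 ^ n * ∫ z, g z := by
        rw [← (measurableEmbedding_dilationEquiv (-n)).integral_map, map_dilationEquiv_volume,
          integral_smul_measure, neg_neg, ← ofReal_two_zpow,
          ENNReal.toReal_ofReal (by positivity), Complex.real_smul]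
        push_cast
        rfl
    _ = 2 ^ n * ft3 φ (dilationEquiv n ζ) := rfl

lemma shellNorm_ft3_dilation (n : ℤ) (φ : 𝓢(R3, ℂ)) (k : ℤ) :
    shellNorm (ft3 (dilation n φ)) k = shellNorm (ft3 φ) (n + k) := by
  rw [funext (ft3_dilation n φ), shellNorm_smul_comp_dilationEquiv]

lemma lqlpNorm_smul_sum_dilation_le {q p : ℝ≥0∞} (hq : 1 ≤ q) (hp : 2 ≤ p) (c : ℂ)
    (s : Finset ℤ) (φ : 𝓢(R3, ℂ)) :
    lqlpNorm q p (c • ∑ n ∈ s, dilation n φ) ≤ 2 * plancherelConst *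
      (∑' k, shellNorm (ft3 φ) k) * (‖c‖ₑ * (s.card : ℝ≥0∞) ^ (1 / q.toReal)) := by
  have hq0 : q ≠ 0 := (one_pos.trans_le hq).ne'
  have hshift (k : ℤ) : shellNorm (ft3 (c • ∑ n ∈ s, dilation n φ : 𝓢(R3, ℂ))) k ≤
      ‖c‖ₑ * ∑ n ∈ s, shellNorm (ft3 φ) (n + k) := by
    simpa only [shellNorm_ft3_dilation] using
      shellNorm_ft3_smul_sum_le c s (fun n => dilation n φ) k
  calc lqlpNorm q p (c • ∑ n ∈ s, dilation n φ)
      ≤ 2 * plancherelConst * (‖c‖ₑ * lpS q fun k => ∑ n ∈ s, shellNorm (ft3 φ) (n + k)) := by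
        rw [← lpS_const_mul hq0]
        grw [lqlpNorm_le_lpS_shellNorm hq0 hp, lpS_mono hshift]
    _ ≤ 2 * plancherelConst * (‖c‖ₑ * ((s.card : ℝ≥0∞) ^ (1 / q.toReal) *
          ∑' k, shellNorm (ft3 φ) k)) := by
        grw [lpS_sum_add_le hq]
    _ = _ := by ring

lemma tendsto_lqlpNorm_smul_sum_dilation {q p : ℝ≥0∞} (hq : 1 ≤ q) (hp : 2 ≤ p) (φ : 𝓢(R3, ℂ))
    {c : ℕ → ℝ} (hc : Tendsto (fun j => c j * (j : ℝ) ^ (1 / q.toReal)) atTop (nhds 0)) :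
    Tendsto (fun j : ℕ => lqlpNorm q p ((c j : ℂ) • ∑ n ∈ Finset.Ico (0 : ℤ) j, dilation n φ))
      atTop (nhds 0) := by
  set B := 2 * plancherelConst * ∑' k, shellNorm (ft3 φ) k
  have hB : B ≠ ∞ := by
    have hsum := tsum_shellNorm_ne_top (fourierR3CLM φ)
    rw [coe_fourierR3CLM] at hsum
    exact ENNReal.mul_ne_top (ENNReal.mul_ne_top ENNReal.ofNat_ne_top plancherelConst_ne_top)
      hsum
  have hbound (j : ℕ) : lqlpNorm q p ((c j : ℂ) • ∑ n ∈ Finset.Ico (0 : ℤ) j, dilation n φ) ≤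
      B * ‖c j * (j : ℝ) ^ (1 / q.toReal)‖ₑ := by
    refine (lqlpNorm_smul_sum_dilation_le hq hp _ _ _).trans_eq ?_
    rw [Int.card_Ico, sub_zero, Int.toNat_natCast, enorm_mul,
      Real.enorm_rpow_of_nonneg (by positivity) (by positivity), Real.enorm_natCast,
      ← enorm_norm (c j : ℂ), Complex.norm_real, enorm_norm]
  have hlim : Tendsto (fun j => B * ‖c j * (j : ℝ) ^ (1 / q.toReal)‖ₑ) atTop (nhds 0) := by
    simpa using ENNReal.Tendsto.const_mul hc.enorm (.inr hB)
  exact tendsto_of_tendsto_of_tendsto_of_le_of_le tendsto_const_nhds hlim (fun _ => zero_le) hbound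

/-! ### Pairing dilated bumps with a bump -/

/-- A smooth cutoff on `ℝ³` equal to `1` on the unit ball, as a nonnegative bump function. -/
def unitBump : ContDiffBump (0 : R3) := ⟨1, 2, one_pos, one_lt_two⟩

/-- `unitBump` as a complex-valued Schwartz function. -/
def unitBumpSchwartz : 𝓢(R3, ℂ) :=
  HasCompactSupport.toSchwartzMap (f := fun z => (unitBump z : ℂ))
    (unitBump.hasCompactSupport.comp_left Complex.ofReal_zero)
    (Complex.ofRealCLM.contDiff.comp unitBump.contDiff)

lemma unitBumpSchwartz_apply (z : R3) : unitBumpSchwartz z = (unitBump z : ℂ) := rfl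

lemma norm_dilationEquiv_neg_le {n : ℤ} (hn : 0 ≤ n) (z : R3) : ‖dilationEquiv (-n) z‖ ≤ ‖z‖ := by
  have hpow : (2 : ℝ) ^ (-n) ≤ 1 := zpow_le_one_of_nonpos₀ one_le_two (neg_nonpos.2 hn)
  refine max_le_max ?_ le_rfl
  rw [dilationEquiv_apply, norm_mul, Real.norm_of_nonneg (by positivity)]
  exact mul_le_of_le_one_left (norm_nonneg _) hpow

lemma volume_real_closedBall_le_re_integral_dilation_mul {n : ℤ} (hn : 0 ≤ n) :
    volume.real (Metric.closedBall (0 : R3) 1) ≤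
      (∫ z, dilation n unitBumpSchwartz z * unitBumpSchwartz z).re := by
  have hre : (∫ z, dilation n unitBumpSchwartz z * unitBumpSchwartz z) =
      ((∫ z, unitBump (dilationEquiv (-n) z) * unitBump z : ℝ) : ℂ) := by
    rw [← integral_complex_ofReal]
    simp only [dilation_apply, unitBumpSchwartz_apply, Complex.ofReal_mul]
  have hint : Integrable fun z => unitBump (dilationEquiv (-n) z) * unitBump z := by
    simpa [dilation_apply, unitBumpSchwartz_apply, ← Complex.ofReal_mul] using
      (integrable_mul_schwartz volume (dilation n unitBumpSchwartz) unitBumpSchwartz).re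
  have hball : ∀ z ∈ Metric.closedBall (0 : R3) 1,
      1 ≤ unitBump (dilationEquiv (-n) z) * unitBump z := by
    intro z hz
    have hz' : dilationEquiv (-n) z ∈ Metric.closedBall (0 : R3) 1 := by
      rw [mem_closedBall_zero_iff] at hz ⊢
      exact (norm_dilationEquiv_neg_le hn z).trans hz
    rw [unitBump.one_of_mem_closedBall hz, unitBump.one_of_mem_closedBall hz', one_mul]
  rw [hre, Complex.ofReal_re]
  calc volume.real (Metric.closedBall (0 : R3) 1)
      = 1 * volume.real (Metric.closedBall (0 : R3) 1) := (one_mul _).symm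
    _ ≤ ∫ z in Metric.closedBall (0 : R3) 1, unitBump (dilationEquiv (-n) z) * unitBump z :=
        setIntegral_ge_of_const_le_real measurableSet_closedBall measure_closedBall_lt_top.ne hball
          hint.integrableOn
    _ ≤ ∫ z, unitBump (dilationEquiv (-n) z) * unitBump z :=
        setIntegral_le_integral hint <| .of_forall fun _ =>
          mul_nonneg unitBump.nonneg unitBump.nonneg

lemma mul_card_mul_volume_le_re_integral {c : ℝ} (hc : 0 ≤ c) {s : Finset ℤ}
    (hs : ∀ n ∈ s, 0 ≤ n) :
    c * s.card * volume.real (Metric.closedBall (0 : R3) 1) ≤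
      (∫ z, ((c : ℂ) • ∑ n ∈ s, dilation n unitBumpSchwartz : 𝓢(R3, ℂ)) z *
        unitBumpSchwartz z).re := by
  have hlin : ∫ z, ((c : ℂ) • ∑ n ∈ s, dilation n unitBumpSchwartz : 𝓢(R3, ℂ)) z *
        unitBumpSchwartz z =
      c * ∑ n ∈ s, ∫ z, dilation n unitBumpSchwartz z * unitBumpSchwartz z := by
    rw [← integral_finsetSum _ fun n _ => integrable_mul_schwartz _ _ _, ← integral_const_mul]
    congr 1 with z
    simp [Finset.sum_mul, mul_assoc]
  rw [hlin, Complex.re_ofReal_mul, Complex.re_sum, mul_assoc, ← nsmul_eq_mul]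
  gcongr
  exact Finset.card_nsmul_le_sum _ _ _ fun n hn =>
    volume_real_closedBall_le_re_integral_dilation_mul (hs n hn)

lemma tendsto_re_integral_smul_sum_dilation {c : ℕ → ℝ} (hc : ∀ j, 0 ≤ c j)
    (htop : Tendsto (fun j => c j * j) atTop atTop) :
    Tendsto (fun j : ℕ => (∫ z, ((c j : ℂ) • ∑ n ∈ Finset.Ico (0 : ℤ) j,
      dilation n unitBumpSchwartz : 𝓢(R3, ℂ)) z * unitBumpSchwartz z).re) atTop atTop := by
  have hvol : 0 < volume.real (Metric.closedBall (0 : R3) 1) :=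
    ENNReal.toReal_pos (Metric.measure_closedBall_pos volume _ one_pos).ne'
      measure_closedBall_lt_top.ne
  refine tendsto_atTop_mono (fun j => ?_) (htop.atTop_mul_const hvol)
  simpa using mul_card_mul_volume_le_re_integral (hc j) (s := Finset.Ico 0 j)
    fun n hn => (Finset.mem_Ico.1 hn).1

/-!
STATEMENT 13: for 1 < q ≤ ∞ and 2 ≤ p ≤ ∞ there is a sequence of Schwartz
functions converging to 0 in l^q l^p L² whose pairing with a fixed Schwartz
function ψ tends to ∞ (so the sequence does not converge as distributions).
-/
theorem lqlp_not_embedded (q p : ℝ≥0∞) (hq : 1 < q) (hp : 2 ≤ p) :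
    ∃ (φ : ℕ → SchwartzMap R3 ℂ) (ψ : SchwartzMap R3 ℂ),
      Tendsto (fun j => lqlpNorm q p (φ j)) atTop (nhds 0) ∧
      Tendsto (fun j => (∫ z : R3, (φ j) z * ψ z).re) atTop atTop := by
  have hq' : 1 / q.toReal < 1 := by
    rcases eq_or_ne q ∞ with rfl | hq_top
    · simp
    · have hlt : 1 < q.toReal :=
        (ENNReal.toReal_lt_toReal ENNReal.one_ne_top hq_top).2 hq
      exact (div_lt_one (one_pos.trans hlt)).2 hlt
  obtain ⟨c, hc, hzero, htop⟩ := exists_tendsto_mul_rpow_zero_tendsto_mul_atTop hq'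
  exact ⟨fun j => (c j : ℂ) • ∑ n ∈ Finset.Ico (0 : ℤ) j, dilation n unitBumpSchwartz,
    unitBumpSchwartz, tendsto_lqlpNorm_smul_sum_dilation hq.le hp _ hzero,
    tendsto_re_integral_smul_sum_dilation hc htop⟩
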